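/- (Max balance I) For every Borel set Γ ⊆ S, the max flux out of the interior of Γ is dominated by the max flux into its closure: Φ_ρ(int Γ, int(S∖Γ)) ≤ Φ_ρ(cl(S∖Γ), cl Γ). -/

import Mathlib

open Filter Topology Metric Set MeasureTheory
open scoped NNReal

noncomputable section

/-- A deviability density on a topological space `E`. -/
def IsDeviabilityDensity {E : Type*} [TopologicalSpace E] (p : E → ℝ) : Prop :=
  (∀ x, p x ∈ Set.Icc (0:ℝ) 1) ∧ (⨆ x, p x) = 1 ∧
    ∀ γ ∈ Set.Ioc (0:ℝ) 1, IsCompact {x | γ ≤ p x}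

variable {S : Type*} [MetricSpace S]

/-- Time shift `θ_s` on continuous paths. -/
def pshift (s : ℝ≥0) (X : C(ℝ≥0, S)) : C(ℝ≥0, S) :=
  ⟨fun t => X (s + t), X.continuous.comp (continuous_const.add continuous_id)⟩

/-- `Π_{x,t}(y)`. -/
def transDen (Px : S → C(ℝ≥0, S) → ℝ) (x : S) (t : ℝ≥0) (y : S) : ℝ :=
  ⨆ X ∈ {X : C(ℝ≥0, S) | X t = y}, Px x X

/-- The standing assumptions (2.2)--(2.5) of the paper, together with the basic
assumptions on the family of path deviability densities `Px` and the set `A`. -/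
structure DevSetup (S : Type*) [MetricSpace S] (Px : S → C(ℝ≥0, S) → ℝ) (A : Set S) :
    Prop where
  dev : ∀ x, IsDeviabilityDensity (Px x)
  start : ∀ x (X : C(ℝ≥0, S)), X 0 ≠ x → Px x X = 0
  /-- (2.2) upper semicontinuity -/
  usc : UpperSemicontinuous (fun q : S × C(ℝ≥0, S) => Px q.1 q.2)
  /-- (2.2) uniform upper compactness -/
  cpt : ∀ K : Set S, IsCompact K → ∀ γ ∈ Set.Ioc (0:ℝ) 1,
    IsCompact (⋃ x ∈ K, {X : C(ℝ≥0, S) | γ ≤ Px x X})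
  /-- (2.3) the maxitive Markov property -/
  markov : ∀ x (X : C(ℝ≥0, S)) (s : ℝ≥0),
    Px x X = (⨆ X' ∈ {X' : C(ℝ≥0, S) | ∀ u ≤ s, X' u = X u}, Px x X') *
      Px (X s) (pshift s X)
  /-- (2.4) `A` is locally finite -/
  locFin : ∀ K : Set S, IsCompact K → (K ∩ A).Finite
  /-- (2.4)(i) -/
  attract : ∀ x (X : C(ℝ≥0, S)), Px x X = 1 → (⨅ t : ℝ≥0, infDist (X t) A) = 0
  /-- (2.4)(ii) -/
  equil : ∀ a ∈ A, Px a (ContinuousMap.const ℝ≥0 a) = 1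
  /-- (2.4)(iii) -/
  connect : ∀ a ∈ A, ∀ a' ∈ A, ∃ t : ℝ≥0, 0 < t ∧ 0 < transDen Px a t a'
  /-- (2.4)(iv) -/
  nearA : ∀ ε : ℝ, 0 < ε → ∃ δ : ℝ, 0 < δ ∧ ∀ x : S, infDist x A < δ →
    ∃ s₀ s₁ : ℝ≥0, 0 < s₀ ∧ 0 < s₁ ∧ ∃ a ∈ A,
      1 - ε < transDen Px x s₀ a ∧ 1 - ε < transDen Px a s₁ x
  /-- (2.4)(v) -/
  localMove : ∀ x : S, ∀ ε : ℝ, 0 < ε → ∃ δ : ℝ, 0 < δ ∧ ∃ t₀ t₁ : ℝ≥0,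
    ∀ x' : S, dist x x' < δ →
      1 - ε < transDen Px x t₀ x' ∧ 1 - ε < transDen Px x' t₁ x
  /-- (2.5) uniform tightness -/
  tight : ∀ K₁ : Set S, IsCompact K₁ → ∀ ε : ℝ, 0 < ε → ∃ K₂ : Set S, IsCompact K₂ ∧
    Filter.limsup (fun t : ℝ≥0 => ⨆ x ∈ K₁, ⨆ y ∈ K₂ᶜ, transDen Px x t y) atTop < ε

/-- LD convergence at the given rate of a sequence of Borel probability measures to a
deviability density. -/
def LDConv {E : Type*} [TopologicalSpace E] [MeasurableSpace E]
    (Q : ℕ → Measure E) (rate : ℕ → ℕ) (p : E → ℝ) : Prop :=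
  ∀ f : E → ℝ, Continuous f → (∀ x, 0 ≤ f x) → BddAbove (Set.range f) →
    Tendsto (fun n => (∫ x, (f x) ^ (rate n) ∂(Q n)) ^ ((rate n : ℝ)⁻¹)) atTop
      (𝓝 (⨆ x, f x * p x))

variable [MeasurableSpace S] [BorelSpace S]

/-- The max flux `Φ_ρ(Γ,Γ')` relative to the limiting transition density `PL`. -/
def maxFlux (PL : S → S → ℝ) (ρ : S → ℝ) (Γ Γ' : Set S) : ℝ :=
  ⨆ x ∈ Γ, ρ x * ⨆ y ∈ Γ', PL x y

/-- `Φ_ρ(Γ, x)`, the max flux into a point. -/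
def maxFluxPt (PL : S → S → ℝ) (ρ : S → ℝ) (Γ : Set S) (x : S) : ℝ :=
  ⨆ a ∈ Γ, ρ a * PL a x

/-! Invariance of `P` under `κ_t` means that both marginals of the joint law `P ⊗ κ_t` equal `P`,
so this law gives the same mass to `Γ × Γᶜ` and to `Γᶜ × Γ`. The joint laws satisfy a large
deviation lower bound on the open set `int Γ × int Γᶜ` and an upper bound on the closed set
`cl Γᶜ × cl Γ`, with exponential rates the max fluxes formed with `Π_{x,t}`; comparing them gives
the inequality at each finite time `t`. As `t → ∞`, pointwise convergence of `ρ x * Π_{x,t}(y)`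
settles the left side. On the right one needs that fluxes between points of two closed sets are
eventually bounded uniformly: far away by tightness, and near a given pair of points because moving
to and from that pair costs almost nothing. -/

open ProbabilityTheory
open scoped ENNReal

section BoundedSuprema

variable {α : Type*} {f : α → ℝ} {s : Set α} {c : ℝ}

lemma le_biSup_of_bddAbove (hf : BddAbove (range f)) {x : α} (hx : x ∈ s) :
    f x ≤ ⨆ z ∈ s, f z := by
  refine le_ciSup₂ (f := fun z (_ : z ∈ s) => f z) (hf.mono ?_) x hx
  exact iUnion_subset fun z => range_subset_iff.2 fun _ => mem_range_self z

lemma biSup_le_of_nonneg (hc : 0 ≤ c) (h : ∀ x ∈ s, f x ≤ c) : ⨆ z ∈ s, f z ≤ c :=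
  Real.iSup_le (fun z => Real.iSup_le (h z) hc) hc

lemma biSup_nonneg (hf : ∀ x ∈ s, 0 ≤ f x) : 0 ≤ ⨆ z ∈ s, f z :=
  Real.iSup_nonneg fun z => Real.iSup_nonneg (hf z)

lemma exists_lt_of_lt_biSup (hc : 0 ≤ c) (h : c < ⨆ z ∈ s, f z) : ∃ x ∈ s, c < f x := by
  contrapose! h
  exact biSup_le_of_nonneg hc h

lemma mul_biSup_le {r : ℝ} (hr : 0 ≤ r) (hc : 0 ≤ c) (h : ∀ x ∈ s, r * f x ≤ c) :
    r * ⨆ z ∈ s, f z ≤ c := by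
  simpa only [Real.mul_iSup_of_nonneg hr] using biSup_le_of_nonneg hc h

end BoundedSuprema

lemma exists_gt_gt_mul_lt {a b c : ℝ} (h : a * b < c) : ∃ a' > a, ∃ b' > b, a' * b' < c := by
  contrapose! h
  exact le_mul_of_forall_lt₀ h

lemma exists_lt_lt_lt_mul {a b c : ℝ} (ha : 0 ≤ a) (hc : 0 ≤ c) (h : c < a * b) :
    ∃ a' ∈ Ico 0 a, ∃ b' ∈ Ico 0 b, c < a' * b' := by
  contrapose! h
  exact mul_le_of_forall_lt_of_nonneg ha hc fun a' ha0 ha' b' hb0 hb' =>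
    h a' ⟨ha0, ha'⟩ b' ⟨hb0, hb'⟩

section SequenceCriterion

variable {E : Type*} [TopologicalSpace E] {x : E}

lemma tendsto_extend_const {m : ℕ → ℕ} (hm : StrictMono m) {z : ℕ → E}
    (hz : Tendsto z atTop (𝓝 x)) :
    Tendsto (Function.extend m z fun _ => x) atTop (𝓝 x) := by
  refine tendsto_iff_forall_eventually_mem.2 fun U hU => ?_
  obtain ⟨K, hK⟩ := eventually_atTop.1 (hz.eventually hU)
  filter_upwards [eventually_ge_atTop (m K)] with n hn
  by_cases hex : ∃ k, m k = n
  · obtain ⟨k, rfl⟩ := hex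
    rw [hm.injective.extend_apply]
    exact hK k (hm.le_iff_le.1 hn)
  · rw [Function.extend_apply' _ _ _ hex]
    exact mem_of_mem_nhds hU

-- A failure on every neighbourhood would yield a sequence tending to `x` along which `Q` fails.
lemma exists_mem_nhds_eventually_forall_of_seq [FirstCountableTopology E] {Q : ℕ → E → Prop}
    (h : ∀ xs : ℕ → E, Tendsto xs atTop (𝓝 x) → ∀ᶠ n in atTop, Q n (xs n)) :
    ∃ U ∈ 𝓝 x, ∀ᶠ n in atTop, ∀ z ∈ U, Q n z := by
  obtain ⟨B, hB⟩ := (𝓝 x).exists_antitone_basis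
  by_contra! hfail
  have hfreq (k : ℕ) : ∃ᶠ n in atTop, ∃ z ∈ B k, ¬ Q n z := by
    simpa only [not_eventually, not_forall, exists_prop] using hfail (B k) (hB.mem k)
  obtain ⟨m, hm, hbad⟩ := extraction_forall_of_frequently hfreq
  choose z hzB hzQ using hbad
  obtain ⟨k, hk⟩ := (hm.tendsto_atTop.eventually
    (h _ (tendsto_extend_const hm (hB.tendsto hzB)))).exists
  rw [hm.injective.extend_apply] at hk
  exact hzQ k hk

end SequenceCriterion

section ExponentialBounds

/-- `limsup (u n) ^ (1 / r n) ≤ c`: the sequence `u` is of exponential order at most `c` at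
rate `r`, spelled out without roots. -/
def IsExpUpperBound (u : ℕ → ℝ≥0∞) (r : ℕ → ℕ) (c : ℝ) : Prop :=
  ∀ c' > c, ∀ᶠ n in atTop, u n ≤ ENNReal.ofReal (c' ^ r n)

/-- `c ≤ liminf (u n) ^ (1 / r n)`: the sequence `u` is of exponential order at least `c` at
rate `r`, spelled out without roots. Only `c' ≥ 0` are tested because of even powers. -/
def IsExpLowerBound (u : ℕ → ℝ≥0∞) (r : ℕ → ℕ) (c : ℝ) : Prop :=
  ∀ c' ∈ Ico 0 c, ∀ᶠ n in atTop, ENNReal.ofReal (c' ^ r n) ≤ u n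

variable {u v : ℕ → ℝ≥0∞} {r : ℕ → ℕ} {c d : ℝ}

lemma isExpUpperBound_of_eventually_le (hc : 0 ≤ c)
    (h : ∀ᶠ n in atTop, u n ≤ ENNReal.ofReal (c ^ r n)) : IsExpUpperBound u r c := by
  intro c' hc'
  filter_upwards [h] with n hn
  exact hn.trans (ENNReal.ofReal_le_ofReal (pow_le_pow_left₀ hc hc'.le _))

lemma IsExpUpperBound.mono_const (hu : IsExpUpperBound u r c) (hcd : c ≤ d) :
    IsExpUpperBound u r d :=
  fun c' hc' => hu c' (hcd.trans_lt hc')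

lemma IsExpUpperBound.mono (hv : IsExpUpperBound v r c) (huv : ∀ᶠ n in atTop, u n ≤ v n) :
    IsExpUpperBound u r c :=
  fun c' hc' => huv.mp ((hv c' hc').mono fun _ h2 h1 => h1.trans h2)

lemma IsExpLowerBound.mono (hu : IsExpLowerBound u r c) (huv : ∀ᶠ n in atTop, u n ≤ v n) :
    IsExpLowerBound v r c :=
  fun c' hc' => huv.mp ((hu c' hc').mono fun _ h1 h2 => h1.trans h2)

-- The principle of the largest term: a sum of two terms costs a factor 2, invisible at exponential
-- scale.
lemma IsExpUpperBound.add (hr : Tendsto r atTop atTop) (hc : 0 ≤ c)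
    (hu : IsExpUpperBound u r c) (hv : IsExpUpperBound v r c) :
    IsExpUpperBound (fun n => u n + v n) r c := by
  intro c' hc'
  obtain ⟨a, hca, hac'⟩ := exists_between hc'
  have ha : 0 ≤ a := hc.trans hca.le
  have hpow : ∀ᶠ n in atTop, 2 * a ^ r n ≤ c' ^ r n := by
    filter_upwards [((isLittleO_pow_pow_of_lt_left ha hac').comp_tendsto hr).bound
      (half_pos one_pos)] with n hn
    simp only [Function.comp_apply, norm_pow, Real.norm_of_nonneg ha,
      Real.norm_of_nonneg (ha.trans hac'.le)] at hn
    linarith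
  filter_upwards [hu a hca, hv a hca, hpow] with n hun hvn hn
  calc u n + v n ≤ ENNReal.ofReal (a ^ r n) + ENNReal.ofReal (a ^ r n) := add_le_add hun hvn
    _ = ENNReal.ofReal (2 * a ^ r n) := by
        rw [two_mul, ENNReal.ofReal_add (pow_nonneg ha _) (pow_nonneg ha _)]
    _ ≤ ENNReal.ofReal (c' ^ r n) := ENNReal.ofReal_le_ofReal hn

lemma IsExpLowerBound.le_of_isExpUpperBound (hr : Tendsto r atTop atTop) (hc : 0 ≤ c)
    (hl : IsExpLowerBound u r d) (hu : IsExpUpperBound u r c) : d ≤ c := by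
  by_contra! hcd
  obtain ⟨a, hca, had⟩ := exists_between hcd
  obtain ⟨b, hab, hbd⟩ := exists_between had
  have ha : 0 ≤ a := hc.trans hca.le
  obtain ⟨n, hun, hln, hrn⟩ := ((hu a hca).and
    ((hl b ⟨ha.trans hab.le, hbd⟩).and (hr.eventually_ne_atTop 0))).exists
  have hpow : a ^ r n < b ^ r n := pow_lt_pow_left₀ hab ha hrn
  exact (hln.trans hun).not_gt
    ((ENNReal.ofReal_lt_ofReal_iff ((pow_nonneg ha _).trans_lt hpow)).2 hpow)

end ExponentialBounds

section DeviabilityDensity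

variable {E F : Type*} [TopologicalSpace E] [TopologicalSpace F] {p : E → ℝ}

namespace IsDeviabilityDensity

lemma nonneg (hp : IsDeviabilityDensity p) (x : E) : 0 ≤ p x := (hp.1 x).1

lemma le_one (hp : IsDeviabilityDensity p) (x : E) : p x ≤ 1 := (hp.1 x).2

lemma bddAbove_range (hp : IsDeviabilityDensity p) : BddAbove (range p) :=
  ⟨1, forall_mem_range.2 hp.le_one⟩

lemma isCompact_superlevel (hp : IsDeviabilityDensity p) {γ : ℝ} (hγ : 0 < γ) :
    IsCompact {x | γ ≤ p x} := by
  obtain h1 | h1 := le_or_gt γ 1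
  · exact hp.2.2 γ ⟨hγ, h1⟩
  · have hempty : {x | γ ≤ p x} = ∅ :=
      eq_empty_of_forall_notMem fun x hx => (hx.trans (hp.le_one x)).not_gt h1
    exact hempty ▸ isCompact_empty

lemma upperSemicontinuous [T2Space E] (hp : IsDeviabilityDensity p) : UpperSemicontinuous p := by
  refine upperSemicontinuous_iff_isClosed_preimage.2 fun γ => ?_
  obtain hγ | hγ := le_or_gt γ 0
  · have huniv : p ⁻¹' Ici γ = univ := eq_univ_of_forall fun x => hγ.trans (hp.nonneg x)
    exact huniv ▸ isClosed_univ
  · exact (hp.isCompact_superlevel hγ).isClosed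

lemma map [T2Space F] (hp : IsDeviabilityDensity p) {f : E → F} (hf : Continuous f) :
    IsDeviabilityDensity fun y => ⨆ x ∈ {x | f x = y}, p x := by
  have hle (x : E) : p x ≤ ⨆ z ∈ {z | f z = f x}, p z :=
    le_biSup_of_bddAbove (s := {z | f z = f x}) hp.bddAbove_range rfl
  have hmem (y : F) : ⨆ x ∈ {x | f x = y}, p x ∈ Icc (0 : ℝ) 1 :=
    ⟨biSup_nonneg fun x _ => hp.nonneg x, biSup_le_of_nonneg zero_le_one fun x _ => hp.le_one x⟩
  refine ⟨hmem, le_antisymm (Real.iSup_le (fun y => (hmem y).2) zero_le_one) ?_, ?_⟩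
  · rw [← hp.2.1]
    refine Real.iSup_le (fun x => (hle x).trans ?_) (Real.iSup_nonneg fun y => (hmem y).1)
    exact le_ciSup (f := fun y => ⨆ z ∈ {z | f z = y}, p z)
      ⟨1, forall_mem_range.2 fun y => (hmem y).2⟩ (f x)
  · rintro γ ⟨hγ, -⟩
    have hlevel : {y | γ ≤ ⨆ x ∈ {x | f x = y}, p x} = ⋂ b ∈ Ioo 0 γ, f '' {x | b ≤ p x} := by
      ext y
      refine ⟨fun hy => mem_iInter₂.2 fun b hb => ?_, fun hy => ?_⟩
      · obtain ⟨x, hxy, hbx⟩ := exists_lt_of_lt_biSup hb.1.le (hb.2.trans_le hy)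
        exact ⟨x, hbx.le, hxy⟩
      · refine mem_ofPred_eq ▸ le_of_forall_lt_imp_le_of_dense fun b hbγ => ?_
        obtain hb | hb := le_or_gt b 0
        · exact hb.trans (hmem y).1
        · obtain ⟨x, hbx, rfl⟩ := mem_iInter₂.1 hy b ⟨hb, hbγ⟩
          exact le_trans hbx (hle x)
    have himage {b : ℝ} (hb : 0 < b) : IsCompact (f '' {x | b ≤ p x}) :=
      (hp.isCompact_superlevel hb).image hf
    rw [hlevel]
    exact (himage (half_pos hγ)).of_isClosed_subset
      (isClosed_biInter fun b hb => (himage hb.1).isClosed)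
      (biInter_subset_of_mem ⟨half_pos hγ, half_lt_self hγ⟩)

end IsDeviabilityDensity

end DeviabilityDensity

section LDBounds

variable {E : Type*} [TopologicalSpace E] [MeasurableSpace E] [OpensMeasurableSpace E]

lemma integrable_pow_of_mem_Icc {μ : Measure E} [IsFiniteMeasure μ] {f : C(E, ℝ)}
    (hf : ∀ x, f x ∈ Icc (0 : ℝ) 1) (n : ℕ) : Integrable (fun x => f x ^ n) μ := by
  refine Integrable.of_bound (C := 1) (f.continuous.pow n).measurable.aestronglyMeasurable
    (Eventually.of_forall fun x => ?_)
  rw [Real.norm_of_nonneg (pow_nonneg (hf x).1 n)]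
  exact pow_le_one₀ (hf x).1 (hf x).2

lemma measureReal_le_integral_pow {μ : Measure E} [IsFiniteMeasure μ] {f : C(E, ℝ)}
    (hf : ∀ x, f x ∈ Icc (0 : ℝ) 1) {D : Set E} (hD : MeasurableSet D) (hfD : EqOn f 1 D) (n : ℕ) :
    μ.real D ≤ ∫ x, f x ^ n ∂μ := by
  rw [← integral_indicator_one hD]
  refine integral_mono ((integrable_const 1).indicator hD) (integrable_pow_of_mem_Icc hf n)
    (indicator_le' (fun x hx => ?_) fun x _ => pow_nonneg (hf x).1 n)
  simp only [hfD hx, Pi.one_apply, one_pow, le_refl]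

lemma integral_pow_le_measureReal {μ : Measure E} [IsFiniteMeasure μ] {f : C(E, ℝ)}
    (hf : ∀ x, f x ∈ Icc (0 : ℝ) 1) {O : Set E} (hO : MeasurableSet O) (hfO : EqOn f 0 Oᶜ)
    {n : ℕ} (hn : n ≠ 0) : ∫ x, f x ^ n ∂μ ≤ μ.real O := by
  rw [← integral_indicator_one hO]
  refine integral_mono (integrable_pow_of_mem_Icc hf n) ((integrable_const 1).indicator hO)
    (le_indicator (fun x _ => pow_le_one₀ (hf x).1 (hf x).2) fun x hx => ?_)
  simp only [hfO hx, Pi.zero_apply, zero_pow hn, le_refl]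

namespace LDConv

variable [T4Space E] {Q : ℕ → Measure E} [∀ n, IsFiniteMeasure (Q n)] {r : ℕ → ℕ} {p : E → ℝ}

lemma isExpUpperBound_of_isClosed (hQ : LDConv Q r p) (hp : IsDeviabilityDensity p)
    (hr : Tendsto r atTop atTop) {D : Set E} (hD : IsClosed D) :
    IsExpUpperBound (fun n => Q n D) r (⨆ y ∈ D, p y) := by
  intro c hc
  obtain ⟨b, hb, hbc⟩ := exists_between hc
  have hb0 : 0 < b := (biSup_nonneg fun x _ => hp.nonneg x).trans_lt hb
  have hdisj : Disjoint {x | b ≤ p x} D := Set.disjoint_left.2 fun x hbx hxD =>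
    (hbx.trans (le_biSup_of_bddAbove hp.bddAbove_range hxD)).not_gt hb
  obtain ⟨f, hf0, hf1, hf⟩ := exists_continuous_zero_one_of_isClosed
    (hp.isCompact_superlevel hb0).isClosed hD hdisj
  have hsup : ⨆ x, f x * p x ≤ b := by
    refine Real.iSup_le (fun x => ?_) hb0.le
    obtain hx | hx := le_or_gt b (p x)
    · simpa only [hf0 hx, Pi.zero_apply, zero_mul] using hb0.le
    · exact (mul_le_of_le_one_left (hp.nonneg x) (hf x).2).trans hx.le
  have hlim := hQ f f.continuous (fun x => (hf x).1) ⟨1, forall_mem_range.2 fun x => (hf x).2⟩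
  filter_upwards [hlim.eventually_lt_const (hsup.trans_lt hbc), hr.eventually_gt_atTop 0]
    with n hn hrn
  have hint : ∫ x, f x ^ r n ∂Q n ≤ c ^ r n := by
    rw [← Real.rpow_natCast, ← Real.rpow_inv_le_iff_of_pos
      (integral_nonneg fun x => pow_nonneg (hf x).1 _) (hb0.trans hbc).le (Nat.cast_pos.2 hrn)]
    exact hn.le
  rw [← ofReal_measureReal]
  exact ENNReal.ofReal_le_ofReal
    ((measureReal_le_integral_pow hf hD.measurableSet hf1 _).trans hint)

lemma isExpLowerBound_of_isOpen (hQ : LDConv Q r p) (hp : IsDeviabilityDensity p)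
    (hr : Tendsto r atTop atTop) {O : Set E} (hO : IsOpen O) {y : E} (hy : y ∈ O) :
    IsExpLowerBound (fun n => Q n O) r (p y) := by
  rintro c ⟨hc0, hc⟩
  obtain ⟨f, hf0, hf1, hf⟩ := exists_continuous_zero_one_of_isClosed hO.isClosed_compl
    (isClosed_singleton (x := y)) (disjoint_singleton_right.2 fun h => h hy)
  have hsup : p y ≤ ⨆ x, f x * p x := by
    have hbdd : BddAbove (range fun x => f x * p x) :=
      ⟨1, forall_mem_range.2 fun x => mul_le_one₀ (hf x).2 (hp.nonneg x) (hp.le_one x)⟩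
    simpa only [hf1 rfl, Pi.one_apply, one_mul] using le_ciSup hbdd y
  have hlim := hQ f f.continuous (fun x => (hf x).1) ⟨1, forall_mem_range.2 fun x => (hf x).2⟩
  filter_upwards [hlim.eventually_const_lt (hc.trans_le hsup), hr.eventually_gt_atTop 0]
    with n hn hrn
  have hint : c ^ r n ≤ ∫ x, f x ^ r n ∂Q n := by
    rw [← Real.rpow_natCast, ← Real.le_rpow_inv_iff_of_pos hc0
      (integral_nonneg fun x => pow_nonneg (hf x).1 _) (Nat.cast_pos.2 hrn)]
    exact hn.le
  rw [← ofReal_measureReal]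
  exact ENNReal.ofReal_le_ofReal
    (hint.trans (integral_pow_le_measureReal hf hO.measurableSet hf0 hrn.ne'))

end LDConv

end LDBounds

section JointLaw

variable {E F : Type*} [TopologicalSpace E] [MeasurableSpace E]
  [TopologicalSpace F] [MeasurableSpace F]

/-- LD convergence of a sequence of kernels to a transition density `q`, in the sense of
continuous convergence: `κ n (xs n)` LD converges at rate `n` to `q x` whenever `xs n → x`. -/
def KernelLDConv (κ : ℕ → Kernel E F) (q : E → F → ℝ) : Prop :=
  ∀ (x : E) (xs : ℕ → E), Tendsto xs atTop (𝓝 x) →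
    LDConv (fun n => κ n (xs n)) (fun n => n) (q x)

namespace KernelLDConv

variable [FirstCountableTopology E] [T4Space F] [OpensMeasurableSpace F]
  {κ : ℕ → Kernel E F} [∀ n, IsMarkovKernel (κ n)] {q : E → F → ℝ} {x : E} {b : ℝ}

lemma exists_mem_nhds_apply_le (hκ : KernelLDConv κ q) (hq : IsDeviabilityDensity (q x))
    {D : Set F} (hD : IsClosed D) (hb : ⨆ y ∈ D, q x y < b) :
    ∃ U ∈ 𝓝 x, ∀ᶠ n in atTop, ∀ z ∈ U, κ n z D ≤ ENNReal.ofReal (b ^ n) :=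
  exists_mem_nhds_eventually_forall_of_seq fun xs hxs =>
    (hκ x xs hxs).isExpUpperBound_of_isClosed hq tendsto_id hD b hb

lemma exists_mem_nhds_le_apply (hκ : KernelLDConv κ q) (hq : IsDeviabilityDensity (q x))
    {V : Set F} (hV : IsOpen V) {y : F} (hy : y ∈ V) (hb : b ∈ Ico 0 (q x y)) :
    ∃ U ∈ 𝓝 x, ∀ᶠ n in atTop, ∀ z ∈ U, ENNReal.ofReal (b ^ n) ≤ κ n z V :=
  exists_mem_nhds_eventually_forall_of_seq fun xs hxs =>
    (hκ x xs hxs).isExpLowerBound_of_isOpen hq tendsto_id hV hy b hb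

end KernelLDConv

variable [T4Space E] [OpensMeasurableSpace E] [FirstCountableTopology E]
  [T4Space F] [OpensMeasurableSpace F]
  {κ : ℕ → Kernel E F} [∀ n, IsMarkovKernel (κ n)] {q : E → F → ℝ}
  {μ : ℕ → Measure E} [∀ k, IsFiniteMeasure (μ k)] {ρ : E → ℝ} {r : ℕ → ℕ}

lemma exists_isOpen_isExpUpperBound_compProd (hκ : KernelLDConv κ q) (hμ : LDConv μ r ρ)
    (hr : Tendsto r atTop atTop) (hρ : IsDeviabilityDensity ρ) {x : E}
    (hq : IsDeviabilityDensity (q x)) {D : Set F} (hD : IsClosed D) {c : ℝ}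
    (hc : ρ x * ⨆ y ∈ D, q x y < c) :
    ∃ U, IsOpen U ∧ x ∈ U ∧ IsExpUpperBound (fun k => (μ k ⊗ₘ κ (r k)) (U ×ˢ D)) r c := by
  obtain ⟨a, ha, b, hb, hab⟩ := exists_gt_gt_mul_lt hc
  obtain ⟨a', ha', ha'a⟩ := exists_between ha
  have ha0 : 0 ≤ a' := (hρ.nonneg x).trans ha'.le
  have hb0 : 0 ≤ b := (biSup_nonneg fun y _ => hq.nonneg y).trans hb.le
  obtain ⟨U₁, hU₁, hκU₁⟩ := hκ.exists_mem_nhds_apply_le hq hD hb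
  obtain ⟨N, ⟨hN, hNclosed⟩, hNρ⟩ :=
    (closed_nhds_basis x).eventually_iff.1 (hρ.upperSemicontinuous x a' ha')
  obtain ⟨U, hU, hUopen, hxU⟩ := _root_.mem_nhds_iff.1 (inter_mem hU₁ hN)
  have hμN : ∀ᶠ k in atTop, μ k N ≤ ENNReal.ofReal (a ^ r k) :=
    hμ.isExpUpperBound_of_isClosed hρ hr hNclosed a
      ((biSup_le_of_nonneg ha0 fun z hz => (hNρ hz).le).trans_lt ha'a)
  refine ⟨U, hUopen, hxU, isExpUpperBound_of_eventually_le
    ((mul_nonneg (ha0.trans ha'a.le) hb0).trans hab.le) ?_⟩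
  filter_upwards [hμN, hr.eventually hκU₁] with k hμk hκk
  calc (μ k ⊗ₘ κ (r k)) (U ×ˢ D)
      = ∫⁻ z in U, κ (r k) z D ∂μ k :=
        Measure.compProd_apply_prod hUopen.measurableSet hD.measurableSet
    _ ≤ ∫⁻ _ in U, ENNReal.ofReal (b ^ r k) ∂μ k :=
        setLIntegral_mono measurable_const fun z hz => hκk z (hU hz).1
    _ = ENNReal.ofReal (b ^ r k) * μ k U := setLIntegral_const _ _
    _ ≤ ENNReal.ofReal (b ^ r k) * ENNReal.ofReal (a ^ r k) := by
        gcongr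
        exact (measure_mono fun z hz => (hU hz).2).trans hμk
    _ = ENNReal.ofReal ((a * b) ^ r k) := by
        rw [← ENNReal.ofReal_mul (pow_nonneg hb0 _), mul_pow, mul_comm]
    _ ≤ ENNReal.ofReal (c ^ r k) := ENNReal.ofReal_le_ofReal
        (pow_le_pow_left₀ (mul_nonneg (ha0.trans ha'a.le) hb0) hab.le _)

lemma exists_isOpen_superset_isExpUpperBound_compProd (hκ : KernelLDConv κ q)
    (hμ : LDConv μ r ρ) (hr : Tendsto r atTop atTop) (hρ : IsDeviabilityDensity ρ)
    (hq : ∀ x, IsDeviabilityDensity (q x)) {K : Set E} (hK : IsCompact K) {D : Set F}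
    (hD : IsClosed D) {c : ℝ} (hc0 : 0 ≤ c) (hc : ∀ x ∈ K, ρ x * ⨆ y ∈ D, q x y < c) :
    ∃ U, IsOpen U ∧ K ⊆ U ∧ IsExpUpperBound (fun k => (μ k ⊗ₘ κ (r k)) (U ×ˢ D)) r c := by
  refine hK.induction_on (p := fun s => ∃ U, IsOpen U ∧ s ⊆ U ∧
    IsExpUpperBound (fun k => (μ k ⊗ₘ κ (r k)) (U ×ˢ D)) r c) ?_ ?_ ?_ fun x hx => ?_
  · refine ⟨∅, isOpen_empty, subset_rfl, isExpUpperBound_of_eventually_le hc0 ?_⟩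
    simp only [empty_prod, measure_empty, zero_le, Eventually.of_forall, implies_true]
  · rintro s t hst ⟨U, hU, htU, hbound⟩
    exact ⟨U, hU, hst.trans htU, hbound⟩
  · rintro s t ⟨U, hU, hsU, hboundU⟩ ⟨V, hV, htV, hboundV⟩
    refine ⟨U ∪ V, hU.union hV, union_subset_union hsU htV,
      (hboundU.add hr hc0 hboundV).mono (Eventually.of_forall fun k => ?_)⟩
    exact union_prod (s₁ := U) ▸ measure_union_le _ _
  · obtain ⟨U, hU, hxU, hbound⟩ :=
      exists_isOpen_isExpUpperBound_compProd hκ hμ hr hρ (hq x) hD (hc x hx)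
    exact ⟨U, mem_nhdsWithin_of_mem_nhds (hU.mem_nhds hxU), U, hU, subset_rfl, hbound⟩

lemma isExpUpperBound_compProd_of_isClosed (hκ : KernelLDConv κ q) (hμ : LDConv μ r ρ)
    (hr : Tendsto r atTop atTop) (hρ : IsDeviabilityDensity ρ)
    (hq : ∀ x, IsDeviabilityDensity (q x)) {C : Set E} (hC : IsClosed C) {D : Set F}
    (hD : IsClosed D) {c : ℝ} (hc0 : 0 ≤ c) (hc : ∀ x ∈ C, ρ x * ⨆ y ∈ D, q x y ≤ c) :
    IsExpUpperBound (fun k => (μ k ⊗ₘ κ (r k)) (C ×ˢ D)) r c := by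
  intro c' hc'
  obtain ⟨d, hcd, hdc'⟩ := exists_between hc'
  have hd0 : 0 < d := hc0.trans_lt hcd
  obtain ⟨U, hU, hCU, hboundU⟩ := exists_isOpen_superset_isExpUpperBound_compProd hκ hμ hr hρ hq
    ((hρ.isCompact_superlevel hd0).inter_right hC) hD hd0.le fun x hx => (hc x hx.2).trans_lt hcd
  have hboundC : IsExpUpperBound (fun k => μ k (C \ U)) r d := by
    refine (hμ.isExpUpperBound_of_isClosed hρ hr (hC.sdiff hU)).mono_const
      (biSup_le_of_nonneg hd0.le fun x hx => ?_)
    by_contra! hdx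
    exact hx.2 (hCU ⟨hdx.le, hx.1⟩)
  refine ((hboundU.add hr hd0.le hboundC).mono (Eventually.of_forall fun k => ?_)) c' hdc'
  calc (μ k ⊗ₘ κ (r k)) (C ×ˢ D)
      ≤ (μ k ⊗ₘ κ (r k)) (U ×ˢ D ∪ (C \ U) ×ˢ univ) := measure_mono fun z hz => by
        by_cases hzU : z.1 ∈ U
        · exact Or.inl ⟨hzU, hz.2⟩
        · exact Or.inr ⟨⟨hz.1, hzU⟩, mem_univ _⟩
    _ ≤ (μ k ⊗ₘ κ (r k)) (U ×ˢ D) + (μ k ⊗ₘ κ (r k)) ((C \ U) ×ˢ univ) := measure_union_le _ _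
    _ = (μ k ⊗ₘ κ (r k)) (U ×ˢ D) + μ k (C \ U) := by
        rw [Measure.compProd_apply_prod (hC.sdiff hU).measurableSet .univ]
        simp only [measure_univ, lintegral_one, Measure.restrict_apply_univ]

lemma isExpLowerBound_compProd_of_isOpen (hκ : KernelLDConv κ q) (hμ : LDConv μ r ρ)
    (hr : Tendsto r atTop atTop) (hρ : IsDeviabilityDensity ρ) {x : E}
    (hq : IsDeviabilityDensity (q x)) {O : Set E} (hO : IsOpen O) {V : Set F} (hV : IsOpen V)
    (hx : x ∈ O) {y : F} (hy : y ∈ V) :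
    IsExpLowerBound (fun k => (μ k ⊗ₘ κ (r k)) (O ×ˢ V)) r (ρ x * q x y) := by
  rintro c ⟨hc0, hc⟩
  obtain ⟨a, ha, b, hb, hab⟩ := exists_lt_lt_lt_mul (hρ.nonneg x) hc0 hc
  obtain ⟨U, hU, hκU⟩ := hκ.exists_mem_nhds_le_apply hq hV hy hb
  obtain ⟨W, hW, hWopen, hxW⟩ := _root_.mem_nhds_iff.1 (inter_mem hU (hO.mem_nhds hx))
  filter_upwards [hμ.isExpLowerBound_of_isOpen hρ hr hWopen hxW a ha, hr.eventually hκU]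
    with k hμk hκk
  calc ENNReal.ofReal (c ^ r k)
      ≤ ENNReal.ofReal ((a * b) ^ r k) :=
        ENNReal.ofReal_le_ofReal (pow_le_pow_left₀ hc0 hab.le _)
    _ = ENNReal.ofReal (b ^ r k) * ENNReal.ofReal (a ^ r k) := by
        rw [← ENNReal.ofReal_mul (pow_nonneg hb.1 _), mul_pow, mul_comm]
    _ ≤ ENNReal.ofReal (b ^ r k) * μ k W := by gcongr
    _ = ∫⁻ _ in W, ENNReal.ofReal (b ^ r k) ∂μ k := (setLIntegral_const _ _).symm
    _ ≤ ∫⁻ z in W, κ (r k) z V ∂μ k := setLIntegral_mono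
        ((κ (r k)).measurable_coe hV.measurableSet) fun z hz => hκk z (hW hz).1
    _ ≤ ∫⁻ z in O, κ (r k) z V ∂μ k := lintegral_mono_set fun z hz => (hW hz).2
    _ = (μ k ⊗ₘ κ (r k)) (O ×ˢ V) :=
        (Measure.compProd_apply_prod hO.measurableSet hV.measurableSet).symm

end JointLaw

section Balance

variable {E : Type*} [MeasurableSpace E] {Γ : Set E}

lemma measure_prod_compl_eq_measure_compl_prod {J : Measure (E × E)} [IsFiniteMeasure J]
    (hJ : J.fst = J.snd) (hΓ : MeasurableSet Γ) : J (Γ ×ˢ Γᶜ) = J (Γᶜ ×ˢ Γ) := by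
  have hfst : J (Γ ×ˢ Γ) + J (Γ ×ˢ Γᶜ) = J.fst Γ := by
    rw [Measure.fst_apply hΓ, ← measure_inter_add_sdiff (Prod.fst ⁻¹' Γ) (measurable_snd hΓ)]
    rfl
  have hsnd : J (Γ ×ˢ Γ) + J (Γᶜ ×ˢ Γ) = J.snd Γ := by
    rw [Measure.snd_apply hΓ, ← measure_inter_add_sdiff (Prod.snd ⁻¹' Γ) (measurable_fst hΓ),
      inter_comm, sdiff_eq, inter_comm _ (Prod.fst ⁻¹' Γ)ᶜ]
    rfl
  exact (ENNReal.add_right_inj (measure_ne_top J _)).1 (by rw [hfst, hsnd, hJ])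

lemma compProd_prod_compl_eq_compProd_compl_prod {μ : Measure E} [IsFiniteMeasure μ]
    {κ : Kernel E E} [IsMarkovKernel κ] (hκ : κ.Invariant μ) (hΓ : MeasurableSet Γ) :
    (μ ⊗ₘ κ) (Γ ×ˢ Γᶜ) = (μ ⊗ₘ κ) (Γᶜ ×ˢ Γ) :=
  measure_prod_compl_eq_measure_compl_prod
    (by rw [Measure.fst_compProd, Measure.snd_compProd, hκ]) hΓ

end Balance

section MaxFlux

variable {E : Type*} {q : E → E → ℝ} {ρ : E → ℝ} {Γ Γ' : Set E}

lemma maxFlux_le {c : ℝ} (hρ : ∀ x, 0 ≤ ρ x) (hc : 0 ≤ c)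
    (h : ∀ x ∈ Γ, ∀ y ∈ Γ', ρ x * q x y ≤ c) : maxFlux q ρ Γ Γ' ≤ c :=
  biSup_le_of_nonneg hc fun x hx => mul_biSup_le (hρ x) hc (h x hx)

lemma maxFlux_nonneg (hρ : ∀ x, 0 ≤ ρ x) (hq : ∀ x y, 0 ≤ q x y) : 0 ≤ maxFlux q ρ Γ Γ' :=
  biSup_nonneg fun x _ => mul_nonneg (hρ x) (biSup_nonneg fun y _ => hq x y)

lemma mul_biSup_le_maxFlux (hρ : ∀ x, ρ x ∈ Icc (0 : ℝ) 1) (hq : ∀ x y, q x y ∈ Icc (0 : ℝ) 1)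
    {x : E} (hx : x ∈ Γ) : ρ x * ⨆ y ∈ Γ', q x y ≤ maxFlux q ρ Γ Γ' := by
  refine le_biSup_of_bddAbove (f := fun x => ρ x * ⨆ y ∈ Γ', q x y)
    ⟨1, forall_mem_range.2 fun z => mul_le_one₀ (hρ z).2 ?_ ?_⟩ hx
  · exact biSup_nonneg fun y _ => (hq z y).1
  · exact biSup_le_of_nonneg zero_le_one fun y _ => (hq z y).2

lemma mul_le_maxFlux (hρ : ∀ x, ρ x ∈ Icc (0 : ℝ) 1) (hq : ∀ x y, q x y ∈ Icc (0 : ℝ) 1)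
    {x y : E} (hx : x ∈ Γ) (hy : y ∈ Γ') : ρ x * q x y ≤ maxFlux q ρ Γ Γ' :=
  (mul_le_mul_of_nonneg_left
    (le_biSup_of_bddAbove ⟨1, forall_mem_range.2 fun z => (hq x z).2⟩ hy) (hρ x).1).trans
    (mul_biSup_le_maxFlux hρ hq hx)

theorem maxFlux_interior_le_maxFlux_closure [TopologicalSpace E] [T4Space E]
    [FirstCountableTopology E] [MeasurableSpace E] [OpensMeasurableSpace E]
    {κ : ℕ → Kernel E E} [∀ n, IsMarkovKernel (κ n)] {μ : ℕ → Measure E}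
    [∀ k, IsFiniteMeasure (μ k)] {r : ℕ → ℕ} (hr : Tendsto r atTop atTop)
    (hinv : ∀ k, (κ (r k)).Invariant (μ k)) (hκ : KernelLDConv κ q) (hμ : LDConv μ r ρ)
    (hq : ∀ x, IsDeviabilityDensity (q x)) (hρ : IsDeviabilityDensity ρ) (hΓ : MeasurableSet Γ) :
    maxFlux q ρ (interior Γ) (interior Γᶜ) ≤ maxFlux q ρ (closure Γᶜ) (closure Γ) := by
  have hq01 (x y : E) : q x y ∈ Icc (0 : ℝ) 1 := (hq x).1 y
  have hflux : 0 ≤ maxFlux q ρ (closure Γᶜ) (closure Γ) :=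
    maxFlux_nonneg hρ.nonneg fun x y => (hq01 x y).1
  have hupper : IsExpUpperBound (fun k => (μ k ⊗ₘ κ (r k)) (closure Γᶜ ×ˢ closure Γ)) r
      (maxFlux q ρ (closure Γᶜ) (closure Γ)) :=
    isExpUpperBound_compProd_of_isClosed hκ hμ hr hρ hq isClosed_closure isClosed_closure hflux
      fun x hx => mul_biSup_le_maxFlux hρ.1 hq01 hx
  refine maxFlux_le hρ.nonneg hflux fun x hx y hy => ?_
  have hlower : IsExpLowerBound (fun k => (μ k ⊗ₘ κ (r k)) (interior Γ ×ˢ interior Γᶜ)) r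
      (ρ x * q x y) :=
    isExpLowerBound_compProd_of_isOpen hκ hμ hr hρ (hq x) isOpen_interior isOpen_interior hx hy
  refine (hlower.mono (Eventually.of_forall fun k => ?_)).le_of_isExpUpperBound hr hflux hupper
  calc (μ k ⊗ₘ κ (r k)) (interior Γ ×ˢ interior Γᶜ)
      ≤ (μ k ⊗ₘ κ (r k)) (Γ ×ˢ Γᶜ) :=
        measure_mono (prod_mono interior_subset interior_subset)
    _ = (μ k ⊗ₘ κ (r k)) (Γᶜ ×ˢ Γ) := compProd_prod_compl_eq_compProd_compl_prod (hinv k) hΓ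
    _ ≤ (μ k ⊗ₘ κ (r k)) (closure Γᶜ ×ˢ closure Γ) :=
        measure_mono (prod_mono subset_closure subset_closure)

end MaxFlux

section LongTime

variable {T E : Type*} [AddMonoid T] [SemilatticeSup T] [TopologicalSpace E]

/-- A family of deviability densities `p t x`, to be read as the transition densities `Π_{x,t}` of
a maxitive Markov process. Of the process only three consequences are kept: running through an
intermediate point is one way to get from `x` to `z`, nearby points are joined at almost no cost in
both directions (2.4)(v), and the process is uniformly tight at large times (2.5). -/
structure IsTransitionDensity (p : T → E → E → ℝ) : Prop where
  isDeviabilityDensity : ∀ t x, IsDeviabilityDensity (p t x)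
  mul_le : ∀ s t x y z, p s x y * p t y z ≤ p (s + t) x z
  localMove : ∀ x, ∀ η < 1, ∃ t₀ t₁, ∀ᶠ x' in 𝓝 x, η < p t₀ x x' ∧ η < p t₁ x' x
  tight : ∀ K₁, IsCompact K₁ → ∀ ε > 0, ∃ K₂, IsCompact K₂ ∧
    ∀ᶠ t in atTop, ∀ x ∈ K₁, ∀ y ∉ K₂, p t x y < ε

namespace IsTransitionDensity

variable {p : T → E → E → ℝ}

lemma limit_mem_Icc (hp : IsTransitionDensity p) {x y : E} {L : ℝ}
    (hL : Tendsto (fun t => p t x y) atTop (𝓝 L)) : L ∈ Icc (0 : ℝ) 1 :=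
  isClosed_Icc.mem_of_tendsto hL
    (Eventually.of_forall fun t => (hp.isDeviabilityDensity t x).1 y)

variable [CanonicallyOrderedAdd T]

-- A transition from `x'` to `y'` can be prolonged to one from `x` to `y` by moves `x → x'` and
-- `y' → y` that cost almost nothing, so it is bounded by the limit at `(x, y)`.
lemma eventually_prod_nhds_lt (hp : IsTransitionDensity p) {x y : E} {L c : ℝ}
    (hL : Tendsto (fun t => p t x y) atTop (𝓝 L)) (hLc : L < c) :
    ∀ᶠ z : T × E × E in atTop ×ˢ 𝓝 (x, y), p z.1 z.2.1 z.2.2 < c := by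
  obtain ⟨d, hLd, hdc⟩ := exists_between hLc
  have hd : 0 ≤ d := (hp.limit_mem_Icc hL).1.trans hLd.le
  obtain ⟨b, hdb, hbc⟩ := exists_between hdc
  have hc : 0 < c := hd.trans_lt hdc
  have hb : 0 < b := hd.trans_lt hdb
  obtain ⟨t₀, _, hx⟩ := hp.localMove x (b / c) ((div_lt_one hc).2 hbc)
  obtain ⟨_, t₁, hy⟩ := hp.localMove y (d / b) ((div_lt_one hb).2 hdb)
  have hlong : ∀ᶠ t in atTop, p (t₀ + t + t₁) x y < d :=
    (hL.comp (tendsto_atTop_mono (fun t => le_add_self.trans le_self_add)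
      tendsto_id)).eventually_lt_const hLd
  rw [nhds_prod_eq]
  filter_upwards [hlong.prod_mk (hx.prod_mk hy)]
  rintro ⟨t, x', y'⟩ ⟨ht, ⟨hxx', -⟩, -, hy'y⟩
  by_contra! hcp
  have hhalf : b ≤ p (t₀ + t) x y' :=
    calc b = b / c * c := (div_mul_cancel₀ b hc.ne').symm
      _ ≤ p t₀ x x' * p t x' y' :=
        mul_le_mul hxx'.le hcp hc.le ((hp.isDeviabilityDensity t₀ x).nonneg x')
      _ ≤ p (t₀ + t) x y' := hp.mul_le _ _ _ _ _
  refine ht.not_ge ?_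
  calc d = b * (d / b) := (mul_div_cancel₀ d hb.ne').symm
    _ ≤ p (t₀ + t) x y' * p t₁ y' y :=
      mul_le_mul hhalf hy'y.le (div_nonneg hd hb.le)
        ((hp.isDeviabilityDensity (t₀ + t) x).nonneg y')
    _ ≤ p (t₀ + t + t₁) x y := hp.mul_le _ _ _ _ _

lemma eventually_prod_nhds_mul_lt [T2Space E] (hp : IsTransitionDensity p) {ρ : E → ℝ}
    (hρ : IsDeviabilityDensity ρ) {x y : E} {L G : ℝ}
    (hL : Tendsto (fun t => p t x y) atTop (𝓝 L)) (hG : ρ x * L < G) :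
    ∀ᶠ z : T × E × E in atTop ×ˢ 𝓝 (x, y), ρ z.2.1 * p z.1 z.2.1 z.2.2 < G := by
  obtain ⟨a, ha, b, hb, hab⟩ := exists_gt_gt_mul_lt hG
  have hρa : ∀ᶠ z : T × E × E in atTop ×ˢ 𝓝 (x, y), ρ z.2.1 < a :=
    (continuous_fst.tendsto (x, y)).comp tendsto_snd (hρ.upperSemicontinuous x a ha)
  filter_upwards [hρa, hp.eventually_prod_nhds_lt hL hb] with ⟨t, x', y'⟩ hx' hp'
  exact (mul_le_mul hx'.le hp'.le ((hp.isDeviabilityDensity t x').nonneg y')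
    ((hρ.nonneg x).trans ha.le)).trans_lt hab

lemma eventually_forall_mul_lt [T2Space E] (hp : IsTransitionDensity p) {PL : E → E → ℝ}
    (hPL : ∀ x y, Tendsto (fun t => p t x y) atTop (𝓝 (PL x y))) {ρ : E → ℝ}
    (hρ : IsDeviabilityDensity ρ) {C D : Set E} (hC : IsClosed C) (hD : IsClosed D) {G : ℝ}
    (hG : 0 < G) (h : ∀ x ∈ C, ∀ y ∈ D, ρ x * PL x y < G) :
    ∀ᶠ t in atTop, ∀ x ∈ C, ∀ y ∈ D, ρ x * p t x y < G := by
  have hK₁ : IsCompact {x | G ≤ ρ x} := hρ.isCompact_superlevel hG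
  obtain ⟨K₂, hK₂, htight⟩ := hp.tight _ hK₁ G hG
  have hcompact : ∀ᶠ t in atTop, ∀ z ∈ ({x | G ≤ ρ x} ∩ C) ×ˢ (K₂ ∩ D),
      ρ z.1 * p t z.1 z.2 < G := by
    have hnhds := ((hK₁.inter_right hC).prod (hK₂.inter_right hD)).mem_prod_nhdsSet_of_forall
      (s := {z : T × E × E | ρ z.2.1 * p z.1 z.2.1 z.2.2 < G}) fun z hz =>
        hp.eventually_prod_nhds_mul_lt hρ (hPL z.1 z.2) (h z.1 hz.1.2 z.2 hz.2.2)
    exact (Eventually.curry hnhds).mono fun _ h => h.self_of_nhdsSet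
  filter_upwards [hcompact, htight] with t hcompact htight x hx y hy
  have hpxy : p t x y ∈ Icc (0 : ℝ) 1 := (hp.isDeviabilityDensity t x).1 y
  obtain hxG | hxG := lt_or_ge (ρ x) G
  · exact (mul_le_of_le_one_right (hρ.nonneg x) hpxy.2).trans_lt hxG
  by_cases hyK : y ∈ K₂
  · exact hcompact (x, y) ⟨⟨hxG, hx⟩, hyK, hy⟩
  · exact (mul_le_of_le_one_left hpxy.1 (hρ.le_one x)).trans_lt (htight x hxG y hyK)

end IsTransitionDensity

end LongTime

section PathSpace

variable {E : Type*} [MetricSpace E]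

lemma exists_eqOn_Iic_pshift_eq {X Y : C(ℝ≥0, E)} {s : ℝ≥0} (h : Y 0 = X s) :
    ∃ Z : C(ℝ≥0, E), EqOn Z X (Iic s) ∧ pshift s Z = Y := by
  have hcont : Continuous fun t : ℝ≥0 => if t ≤ s then X t else Y (t - s) := by
    refine Continuous.if_le X.continuous (by fun_prop) continuous_id continuous_const ?_
    rintro t rfl
    rw [tsub_self, h]
  refine ⟨⟨_, hcont⟩, fun u hu => if_pos hu, ContinuousMap.ext fun t => ?_⟩
  obtain rfl | ht := eq_zero_or_pos t
  · simp only [pshift, ContinuousMap.coe_mk, add_zero, le_refl, if_true, h]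
  · simp only [pshift, ContinuousMap.coe_mk, (lt_add_of_pos_right s ht).not_ge, if_false,
      add_tsub_cancel_left]

namespace DevSetup

variable {Px : E → C(ℝ≥0, E) → ℝ} {A : Set E}

lemma isDeviabilityDensity_transDen (h : DevSetup E Px A) (x : E) (t : ℝ≥0) :
    IsDeviabilityDensity (transDen Px x t) :=
  (h.dev x).map (continuous_eval_const t)

lemma le_transDen (h : DevSetup E Px A) (x : E) (t : ℝ≥0) (X : C(ℝ≥0, E)) :
    Px x X ≤ transDen Px x t (X t) :=
  le_biSup_of_bddAbove (s := {X' : C(ℝ≥0, E) | X' t = X t}) (h.dev x).bddAbove_range rfl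

lemma path_mul_path_le_transDen (h : DevSetup E Px A) (x : E) (X Y : C(ℝ≥0, E)) (s t : ℝ≥0) :
    Px x X * Px (X s) Y ≤ transDen Px x (s + t) (Y t) := by
  by_cases hY : Y 0 = X s
  · obtain ⟨Z, hZX, rfl⟩ := exists_eqOn_Iic_pshift_eq hY
    have hXZ : Px x X ≤ ⨆ X' ∈ {X' : C(ℝ≥0, E) | ∀ u ≤ s, X' u = Z u}, Px x X' :=
      le_biSup_of_bddAbove (s := {X' : C(ℝ≥0, E) | ∀ u ≤ s, X' u = Z u})
        (h.dev x).bddAbove_range fun u hu => (hZX hu).symm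
    calc Px x X * Px (X s) (pshift s Z)
        ≤ Px x Z := by
          rw [h.markov x Z s, hZX self_mem_Iic]
          exact mul_le_mul_of_nonneg_right hXZ ((h.dev _).nonneg _)
      _ ≤ transDen Px x (s + t) (pshift s Z t) := h.le_transDen x (s + t) Z
  · rw [h.start _ Y hY, mul_zero]
    exact (h.isDeviabilityDensity_transDen x (s + t)).nonneg _

lemma transDen_mul_transDen_le (h : DevSetup E Px A) (x y z : E) (s t : ℝ≥0) :
    transDen Px x s y * transDen Px y t z ≤ transDen Px x (s + t) z := by
  have hxz : 0 ≤ transDen Px x (s + t) z := (h.isDeviabilityDensity_transDen x (s + t)).nonneg z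
  refine mul_biSup_le ((h.isDeviabilityDensity_transDen x s).nonneg y) hxz fun Y hY => ?_
  rw [mul_comm]
  refine mul_biSup_le ((h.dev y).nonneg Y) hxz fun X hX => ?_
  obtain rfl : X s = y := hX
  obtain rfl : Y t = z := hY
  rw [mul_comm]
  exact h.path_mul_path_le_transDen x X Y s t

lemma exists_isCompact_eventually_transDen_lt (h : DevSetup E Px A) {K₁ : Set E}
    (hK₁ : IsCompact K₁) {ε : ℝ} (hε : 0 < ε) : ∃ K₂, IsCompact K₂ ∧
      ∀ᶠ t in atTop, ∀ x ∈ K₁, ∀ y ∉ K₂, transDen Px x t y < ε := by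
  obtain ⟨K₂, hK₂, hlim⟩ := h.tight K₁ hK₁ ε hε
  have hsup (t : ℝ≥0) (x : E) : ⨆ y ∈ K₂ᶜ, transDen Px x t y ≤ 1 :=
    biSup_le_of_nonneg zero_le_one fun y _ => (h.isDeviabilityDensity_transDen x t).le_one y
  have hbdd : IsBoundedUnder (· ≤ ·) atTop
      fun t : ℝ≥0 => ⨆ x ∈ K₁, ⨆ y ∈ K₂ᶜ, transDen Px x t y :=
    isBoundedUnder_of ⟨1, fun t => biSup_le_of_nonneg zero_le_one fun x _ => hsup t x⟩
  refine ⟨K₂, hK₂, (eventually_lt_of_limsup_lt hlim hbdd).mono fun t ht x hx y hy => ?_⟩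
  calc transDen Px x t y
      ≤ ⨆ y ∈ K₂ᶜ, transDen Px x t y :=
        le_biSup_of_bddAbove (h.isDeviabilityDensity_transDen x t).bddAbove_range hy
    _ ≤ ⨆ x ∈ K₁, ⨆ y ∈ K₂ᶜ, transDen Px x t y :=
        le_biSup_of_bddAbove (f := fun x => ⨆ y ∈ K₂ᶜ, transDen Px x t y)
          ⟨1, forall_mem_range.2 (hsup t)⟩ hx
    _ < ε := ht

lemma isTransitionDensity (h : DevSetup E Px A) :
    IsTransitionDensity fun t x y => transDen Px x t y where
  isDeviabilityDensity t x := h.isDeviabilityDensity_transDen x t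
  mul_le s t x y z := h.transDen_mul_transDen_le x y z s t
  localMove x η hη := by
    obtain ⟨δ, hδ, t₀, t₁, hmove⟩ := h.localMove x (1 - η) (sub_pos.2 hη)
    refine ⟨t₀, t₁, ?_⟩
    filter_upwards [ball_mem_nhds x hδ] with x' hx'
    simpa only [sub_sub_cancel] using hmove x' (mem_ball'.1 hx')
  tight _ hK₁ _ hε := h.exists_isCompact_eventually_transDen_lt hK₁ hε

end DevSetup

end PathSpace

theorem stmt10_general {T E : Type*} [AddMonoid T] [SemilatticeSup T] [CanonicallyOrderedAdd T]
    [TopologicalSpace E] [T4Space E] [FirstCountableTopology E] [MeasurableSpace E]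
    [OpensMeasurableSpace E] {p : T → E → E → ℝ} (hp : IsTransitionDensity p) {PL : E → E → ℝ}
    (hPL : ∀ x y, Tendsto (fun t => p t x y) atTop (𝓝 (PL x y)))
    {κ : ℕ → T → Kernel E E} [∀ n t, IsMarkovKernel (κ n t)]
    (hκ : ∀ t, KernelLDConv (fun n => κ n t) (p t))
    {μ : ℕ → Measure E} [∀ k, IsFiniteMeasure (μ k)] {r : ℕ → ℕ} (hr : Tendsto r atTop atTop)
    (hinv : ∀ k t, (κ (r k) t).Invariant (μ k))
    {ρ : E → ℝ} (hρ : IsDeviabilityDensity ρ) (hμ : LDConv μ r ρ)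
    {Γ : Set E} (hΓ : MeasurableSet Γ) :
    maxFlux PL ρ (interior Γ) (interior Γᶜ) ≤ maxFlux PL ρ (closure Γᶜ) (closure Γ) := by
  have hPL01 (x y : E) : PL x y ∈ Icc (0 : ℝ) 1 := hp.limit_mem_Icc (hPL x y)
  refine le_of_forall_gt_imp_ge_of_dense fun G hG => ?_
  have hG0 : 0 < G := (maxFlux_nonneg hρ.nonneg fun x y => (hPL01 x y).1).trans_lt hG
  have hclosure : ∀ᶠ t in atTop, maxFlux (p t) ρ (closure Γᶜ) (closure Γ) ≤ G := by
    filter_upwards [hp.eventually_forall_mul_lt hPL hρ isClosed_closure isClosed_closure hG0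
      fun x hx y hy => (mul_le_maxFlux hρ.1 hPL01 hx hy).trans_lt hG] with t ht
    exact maxFlux_le hρ.nonneg hG0.le fun x hx y hy => (ht x hx y hy).le
  refine maxFlux_le hρ.nonneg hG0.le fun x hx y hy =>
    le_of_tendsto ((hPL x y).const_mul (ρ x)) ?_
  filter_upwards [hclosure] with t ht
  have hpt (x : E) : IsDeviabilityDensity (p t x) := hp.isDeviabilityDensity t x
  calc ρ x * p t x y
      ≤ maxFlux (p t) ρ (interior Γ) (interior Γᶜ) :=
        mul_le_maxFlux hρ.1 (fun x => (hpt x).1) hx hy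
    _ ≤ maxFlux (p t) ρ (closure Γᶜ) (closure Γ) :=
        maxFlux_interior_le_maxFlux_closure (κ := fun n => κ n t) hr (fun k => hinv k t) (hκ t) hμ
          hpt hρ hΓ
    _ ≤ G := ht

theorem stmt10
    (Px : S → C(ℝ≥0, S) → ℝ) (A : Set S) (hyp : DevSetup S Px A)
    (PL : S → S → ℝ)
    (hPL : ∀ x y : S, Tendsto (fun t : ℝ≥0 => transDen Px x t y) atTop (𝓝 (PL x y)))
    (κ : ℕ → ℝ≥0 → ProbabilityTheory.Kernel S S)
    (hκ : ∀ n t, ProbabilityTheory.IsMarkovKernel (κ n t))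
    (P : ℕ → Measure S) (hP : ∀ n, IsProbabilityMeasure (P n))
    (hinv : ∀ n (t : ℝ≥0) (Γ : Set S), MeasurableSet Γ →
      P n Γ = ∫⁻ x, κ n t x Γ ∂(P n))
    (hκLD : ∀ (t : ℝ≥0) (x : S) (xs : ℕ → S), Tendsto xs atTop (𝓝 x) →
      LDConv (fun n => κ n t (xs n)) (fun n => n) (fun y => transDen Px x t y))
    (ρ : S → ℝ) (hρdev : IsDeviabilityDensity ρ)
    (φ : ℕ → ℕ) (hφ : StrictMono φ)
    (hρ : LDConv (fun k => P (φ k)) φ ρ) :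
    ∀ Γ : Set S, MeasurableSet Γ →
      maxFlux PL ρ (interior Γ) (interior Γᶜ) ≤ maxFlux PL ρ (closure Γᶜ) (closure Γ) := by
  intro Γ hΓ
  exact stmt10_general hyp.isTransitionDensity hPL hκLD hφ.tendsto_atTop
    (fun k t => Measure.ext fun B hB =>
      (Measure.bind_apply hB (κ (φ k) t).aemeasurable).trans (hinv (φ k) t B hB).symm) hρdev hρ hΓ
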